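/- For every area sequence w, dinv(ψ(w)) = area(w). -/

import Mathlib

/-- The `i`-th letter of the word `w` (`1`-indexed, as in the paper);
defaults to `0` out of range. -/
def get1 (w : List ℕ) (i : ℕ) : ℕ := w.getD (i - 1) 0

/-- `w` is the area sequence of a Dyck path: the first letter is `0` and each
letter exceeds the previous one by at most one. -/
def IsAreaSeq (w : List ℕ) : Prop :=
  (w ≠ [] → get1 w 1 = 0) ∧ ∀ i, 1 ≤ i → i < w.length → get1 w (i + 1) ≤ get1 w i + 1

/-- Insertion at position `i` (for `0 ≤ i ≤ n`): `ins w 0` prepends a `0`, and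
for `1 ≤ i ≤ n`, `ins w i` inserts the letter `w_i + 1` just after position `i`. -/
def ins (w : List ℕ) (i : ℕ) : List ℕ :=
  w.take i ++ (if i = 0 then 0 else get1 w i + 1) :: w.drop i

/-- The area statistic: the sum of the letters. -/
def area (w : List ℕ) : ℕ := w.sum

/-- The dinv statistic: `dinv w = Σ_i d_i` where `d_i` is the number of `j > i`
with `w_j = w_i` or `w_j = w_i - 1`. -/
def dinv (w : List ℕ) : ℕ :=
  ∑ i ∈ Finset.Icc 1 w.length,
    ((Finset.Ioc i w.length).filter
      (fun j => get1 w j = get1 w i ∨ get1 w j + 1 = get1 w i)).card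

/-- The maximal value of a word (`0` for the empty word). -/
def maxVal (w : List ℕ) : ℕ := w.foldr max 0

/-- Positions of the letters of maximal value `m`. -/
def Maxb (w : List ℕ) : Finset ℕ :=
  (Finset.Icc 1 w.length).filter (fun i => get1 w i = maxVal w)

/-- Positions `i` with `w_i = m - 1` such that all letters after position `i`
are `< m`. -/
def Maxa (w : List ℕ) : Finset ℕ :=
  (Finset.Icc 1 w.length).filter (fun i =>
    get1 w i + 1 = maxVal w ∧ ∀ j ∈ Finset.Ioc i w.length, get1 w j < maxVal w)

/-- The position of the leftmost letter equal to the maximal value `m` in the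
rightmost block of consecutive letters equal to `m`. -/
def i0 (w : List ℕ) : ℕ :=
  ((Finset.Icc 1 w.length).filter (fun i =>
    get1 w i = maxVal w ∧ (i = 1 ∨ get1 w (i - 1) ≠ maxVal w))).sup id

/-- The admissible insertion positions of `w`, listed in admissible order:
the elements of `Maxb w` in decreasing order, then the elements of `Maxa w`
in decreasing order, then `i0 w - 1`.  The empty word has the single
admissible insertion position `0`. -/
def admissible (w : List ℕ) : List ℕ :=
  if w = [] then [0]
  else ((Maxb w).sort (· ≤ ·)).reverse ++ ((Maxa w).sort (· ≤ ·)).reverse ++ [i0 w - 1]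

/-- Auxiliary version of the map `ψ`, reading the reversed word. -/
def psiRev : List ℕ → List ℕ
  | [] => []
  | a :: u => ins (psiRev u) ((admissible (psiRev u)).getD a 0)

/-- The map `ψ`: `ψ(ε) = ε` and `ψ(u a) = ins_{c_a}(ψ(u))` where
`c_0, c_1, …, c_k` are the admissible insertion positions of `ψ(u)` in
admissible order. -/
def psi (w : List ℕ) : List ℕ := psiRev w.reverse

/-- The bounce sequence: `b_1 = 0`, and `b_i = b_{i-1} + 1` if
`b_{i-1} + 1 ≤ w_i`, otherwise `b_i = 0`. -/
def bseq (w : List ℕ) : ℕ → ℕ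
  | 0 => 0
  | 1 => 0
  | (i + 2) => if bseq w (i + 1) + 1 ≤ get1 w (i + 2) then bseq w (i + 1) + 1 else 0

/-- The bounces of `w`: positions `1 < i ≤ n` with `b_i = 0`. -/
def bounces (w : List ℕ) : Finset ℕ :=
  (Finset.Icc 2 w.length).filter (fun i => bseq w i = 0)

/-- The bounce statistic: the sum of the reversed positions `n - i + 1` of the
bounces of `w`. -/
def bounce (w : List ℕ) : ℕ := ∑ i ∈ bounces w, (w.length - i + 1)


/-- Recursive version of dinv. -/
def dinvL : List ℕ → ℕ
  | [] => 0
  | a :: l => l.countP (fun b => b = a ∨ b + 1 = a) + dinvL l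

theorem dinvL_insert (L R : List ℕ) (x : ℕ) :
    dinvL (L ++ x :: R) = dinvL (L ++ R) + R.countP (fun b => b = x ∨ b + 1 = x)
      + L.countP (fun b => b = x ∨ b = x + 1) := by
  induction L with
  | nil => simp [dinvL]; omega
  | cons a L ih =>
    simp only [List.cons_append, dinvL, ih, List.countP_append, List.countP_cons]
    by_cases h1 : x = a ∨ x + 1 = a
    · have h2 : a = x ∨ a = x + 1 := by omega
      simp only [h1, h2]; simp; omega
    · have h2 : ¬ (a = x ∨ a = x + 1) := by omega
      simp only [h1, h2]; simp; omega

theorem get1_cons_succ (a : ℕ) (w : List ℕ) (i : ℕ) (hi : 1 ≤ i) :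
    get1 (a :: w) (i + 1) = get1 w i := by
  obtain ⟨i, rfl⟩ : ∃ k, i = k + 1 := ⟨i - 1, by omega⟩
  simp [get1]

theorem card_Ioc_cons (a : ℕ) (w : List ℕ) (c : ℕ) (P : ℕ → Prop) [DecidablePred P] :
    ((Finset.Ioc (c+1) (w.length+1)).filter (fun j => P (get1 (a :: w) j))).card =
    ((Finset.Ioc c w.length).filter (fun j => P (get1 w j))).card := by
  symm
  apply Finset.card_bij (fun i _ => i + 1)
  · intro i hi
    simp only [Finset.mem_filter, Finset.mem_Ioc] at hi ⊢
    rw [get1_cons_succ _ _ _ (by omega)]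
    exact ⟨by omega, hi.2⟩
  · intro i _ j _ h; omega
  · intro j hj
    simp only [Finset.mem_filter, Finset.mem_Ioc] at hj
    refine ⟨j - 1, ?_, by omega⟩
    simp only [Finset.mem_filter, Finset.mem_Ioc]
    obtain ⟨k, rfl⟩ : ∃ k, j = k + 1 := ⟨j - 1, by omega⟩
    rw [get1_cons_succ _ _ _ (by omega)] at hj
    exact ⟨by omega, hj.2⟩

theorem card_Ioc (w : List ℕ) (c : ℕ) (P : ℕ → Prop) [DecidablePred P] :
    ((Finset.Ioc c w.length).filter (fun j => P (get1 w j))).card =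
      (w.drop c).countP (fun b => P b) := by
  induction w generalizing c with
  | nil => simp
  | cons a w ih =>
    cases c with
    | succ c => rw [List.length_cons, card_Ioc_cons, ih]; simp
    | zero =>
      have h := card_Ioc_cons a w 0 P
      rw [ih] at h
      have h2 : Finset.Ioc 0 (w.length + 1) = insert 1 (Finset.Ioc 1 (w.length+1)) := by
        ext; simp; omega
      rw [List.length_cons, h2, Finset.filter_insert]
      have h3 : get1 (a :: w) 1 = a := by simp [get1]
      simp only [h3]
      simp only [List.drop_zero, List.countP_cons] at h ⊢
      rw [zero_add] at h
      by_cases hp : P a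
      · rw [if_pos hp, Finset.card_insert_of_notMem (by simp), h]
        simp [hp]
      · rw [if_neg hp, h]
        simp [hp]

theorem Icc_eq_Ioc (n : ℕ) : Finset.Icc 1 n = Finset.Ioc 0 n := by
  ext; simp; omega

theorem dinv_eq (w : List ℕ) : dinv w = dinvL w := by
  have key : ∀ w : List ℕ, dinv w = ∑ i ∈ Finset.range w.length,
      (w.drop (i+1)).countP (fun b => b = get1 w (i+1) ∨ b + 1 = get1 w (i+1)) := by
    intro w
    unfold dinv
    rw [Finset.sum_bij (fun i _ => i - 1)]
    · intro i hi; simp at hi ⊢; omega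
    · intro i hi j hj h; simp at hi hj; omega
    · intro i hi; simp at hi; exact ⟨i+1, by simp; omega, by omega⟩
    · intro i hi
      simp only [Finset.mem_Icc] at hi
      rw [card_Ioc w i (fun b => b = get1 w i ∨ b + 1 = get1 w i)]
      rw [Nat.sub_add_cancel hi.1]
  rw [key]
  clear key
  induction w with
  | nil => simp [dinvL]
  | cons a w ih =>
    rw [dinvL, ← ih, List.length_cons, Finset.sum_range_succ', add_comm]
    congr 1
    

theorem le_maxVal (w : List ℕ) : ∀ x ∈ w, x ≤ maxVal w := by
  induction w with
  | nil => simp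
  | cons a w ih =>
    intro x hx
    simp only [maxVal, List.foldr_cons] at ih ⊢
    rcases List.mem_cons.1 hx with rfl | h
    · exact le_max_left _ _
    · exact le_max_of_le_right (ih x h)

theorem maxVal_mem (w : List ℕ) (h : w ≠ []) : maxVal w ∈ w := by
  induction w with
  | nil => simp at h
  | cons a w ih =>
    by_cases hw : w = []
    · subst hw; simp [maxVal]
    · have := ih hw
      simp only [maxVal, List.foldr_cons] at this ⊢
      rcases max_choice a (List.foldr max 0 w) with h | h <;> rw [h] <;> simp [this]

theorem maxVal_eq (w : List ℕ) (M : ℕ) (h : M ∈ w) (h2 : ∀ x ∈ w, x ≤ M) : maxVal w = M :=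
  le_antisymm (h2 _ (maxVal_mem w (by rintro rfl; simp at h))) (le_maxVal w M h)

theorem get1_append_left (A B : List ℕ) (i : ℕ) (h1 : 1 ≤ i) (h : i ≤ A.length) :
    get1 (A ++ B) i = get1 A i := by
  simp only [get1]
  exact List.getD_append _ _ _ _ (by omega)

theorem get1_append_right (A B : List ℕ) (i : ℕ) (h : A.length < i) :
    get1 (A ++ B) i = get1 B (i - A.length) := by
  simp only [get1]
  rw [List.getD_append_right _ _ _ _ (by omega)]
  congr 1; omega

theorem get1_mem (w : List ℕ) (i : ℕ) (h1 : 1 ≤ i) (h : i ≤ w.length) : get1 w i ∈ w := by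
  simp only [get1]
  rw [List.getD_eq_getElem _ _ (by omega)]
  exact List.getElem_mem _

theorem card_Maxb (w : List ℕ) : (Maxb w).card = w.countP (fun b => b = maxVal w) := by
  unfold Maxb
  rw [Icc_eq_Ioc, card_Ioc w 0 (fun b => b = maxVal w)]; simp

theorem Maxa_eq (L R : List ℕ) (M : ℕ) (hL : ∀ x ∈ L, x ≤ M) (hR : ∀ x ∈ R, x < M) :
    Maxa (L ++ M :: R) = (Finset.Ioc (L.length + 1) (L ++ M :: R).length).filter
      (fun j => get1 (L ++ M :: R) j + 1 = M) := by
  have hm : maxVal (L ++ M :: R) = M := by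
    apply maxVal_eq
    · simp
    · intro x hx
      simp at hx
      rcases hx with h | h | h
      · exact hL x h
      · omega
      · exact (hR x h).le
  have hl : ∀ j, L.length + 1 < j → j ≤ (L ++ M :: R).length → get1 (L ++ M :: R) j < M := by
    intro j h1 h2
    apply hR
    rw [get1_append_right _ _ _ (by omega)]
    obtain ⟨k, rfl⟩ : ∃ k, j = L.length + k + 1 := ⟨j - L.length - 1, by omega⟩
    simp at h2
    rw [show L.length + k + 1 - L.length = k + 1 by omega, get1_cons_succ _ _ _ (by omega)]
    exact get1_mem _ _ (by omega) (by omega)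
  have hM : get1 (L ++ M :: R) (L.length + 1) = M := by
    rw [get1_append_right _ _ _ (by omega)]; simp [get1]
  ext i
  unfold Maxa
  rw [hm]
  simp only [Finset.mem_filter, Finset.mem_Icc, Finset.mem_Ioc]
  constructor
  · rintro ⟨h1, h2, h3⟩
    refine ⟨⟨?_, h1.2⟩, h2⟩
    by_contra hc
    rcases lt_or_eq_of_le (not_lt.1 hc) with h | h
    · have := h3 (L.length + 1) ⟨h, by simp⟩
      omega
    · subst h; omega
  · rintro ⟨h1, h2⟩
    exact ⟨⟨by omega, h1.2⟩, h2, fun j hj => hl j (by omega) hj.2⟩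

/-- number of admissible positions minus one -/
def Nadm (w : List ℕ) : ℕ := (Maxb w).card + (Maxa w).card

theorem Nadm_eq (L R : List ℕ) (M : ℕ) (hL : ∀ x ∈ L, x ≤ M) (hR : ∀ x ∈ R, x < M) :
    Nadm (L ++ M :: R) = L.countP (fun b => b = M) + 1 + R.countP (fun b => b + 1 = M) := by
  have hm : maxVal (L ++ M :: R) = M := by
    apply maxVal_eq
    · simp
    · intro x hx
      simp at hx
      rcases hx with h | h | h
      · exact hL x h
      · omega
      · exact (hR x h).le
  unfold Nadm
  rw [card_Maxb, hm, Maxa_eq L R M hL hR, card_Ioc _ _ (fun b => b + 1 = M)]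
  have h0 : R.countP (fun b => decide (b = M)) = 0 := by
    rw [List.countP_eq_zero]; intro x hx; have := hR x hx; simp; omega
  have h1 : List.drop (L.length + 1) (L ++ M :: R) = R := by
    rw [← List.drop_drop]; simp
  rw [h1]
  simp [List.countP_append, h0]

theorem desc_getD (l : List ℕ) (hl : l.Pairwise (fun x y => y < x)) (a : ℕ) (ha : a < l.length) :
    l.getD a 0 ∈ l ∧ (l.filter (fun x => l.getD a 0 < x)).length = a := by
  induction l generalizing a with
  | nil => simp at ha
  | cons b l ih =>
    rw [List.pairwise_cons] at hl
    cases a with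
    | zero =>
      simp
      intro x hx; exact (hl.1 x hx).le
    | succ a =>
      obtain ⟨h1, h2⟩ := ih hl.2 a (by simpa using ha)
      rw [List.getD_cons_succ]
      refine ⟨List.mem_cons_of_mem _ h1, ?_⟩
      rw [List.filter_cons_of_pos (by simpa using hl.1 _ h1)]
      simp only [List.length_cons]; omega

theorem sort_getD (S : Finset ℕ) (a : ℕ) (ha : a < S.card) :
    ((S.sort (· ≤ ·)).reverse).getD a 0 ∈ S ∧
    (S.filter (fun x => ((S.sort (· ≤ ·)).reverse).getD a 0 < x)).card = a := by
  have hs : (S.sort (· ≤ ·)).reverse.Pairwise (fun x y => y < x) := by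
    rw [List.pairwise_reverse]
    exact (Finset.sortedLT_sort S).pairwise
  obtain ⟨h1, h2⟩ := desc_getD _ hs a (by simpa using ha)
  refine ⟨by simpa using h1, ?_⟩
  generalize ((S.sort (· ≤ ·)).reverse).getD a 0 = c at *
  rw [← h2, List.filter_reverse, List.length_reverse]
  rw [← List.toFinset_card_of_nodup ((Finset.sort_nodup S _).filter _)]
  congr 1
  ext x; simp

theorem last_occ (w : List ℕ) (m : ℕ) (h : m ∈ w) :
    ∃ A R, w = A ++ m :: R ∧ m ∉ R := by
  induction w with
  | nil => simp at h
  | cons a w ih =>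
    by_cases hw : m ∈ w
    · obtain ⟨A, R, rfl, h2⟩ := ih hw
      exact ⟨a :: A, R, rfl, h2⟩
    · have : m = a := by simpa [hw] using h
      subst this
      exact ⟨[], w, rfl, hw⟩

theorem tail_block (A : List ℕ) (m : ℕ) :
    ∃ B k, A = B ++ List.replicate k m ∧ (B = [] ∨ ∃ C y, B = C ++ [y] ∧ y ≠ m) := by
  induction A using List.reverseRecOn with
  | nil => exact ⟨[], 0, by simp, Or.inl rfl⟩
  | append_singleton A a ih =>
    by_cases h : a = m
    · subst h
      obtain ⟨B, k, rfl, h2⟩ := ih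
      exact ⟨B, k+1, by simp [List.replicate_succ'], h2⟩
    · exact ⟨A ++ [a], 0, by simp, Or.inr ⟨A, a, rfl, h⟩⟩

theorem isAreaSeq_ins (w : List ℕ) (c : ℕ) (hw : IsAreaSeq w) (hc : c ≤ w.length) :
    IsAreaSeq (ins w c) := by
  obtain ⟨h1, h2⟩ := hw
  have hlt : (w.take c).length = c := by simp [hc]
  have g1 : ∀ i, 1 ≤ i → i ≤ c → get1 (ins w c) i = get1 w i := by
    intro i hi hic
    unfold ins
    rw [get1_append_left _ _ _ hi (by omega), ← get1_append_left _ (w.drop c) _ hi (by omega),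
      List.take_append_drop]
  have g2 : get1 (ins w c) (c+1) = if c = 0 then 0 else get1 w c + 1 := by
    unfold ins
    rw [get1_append_right _ _ _ (by omega), hlt]
    simp [get1]
  have g3 : ∀ i, c < i → get1 (ins w c) (i+1) = get1 w i := by
    intro i hi
    unfold ins
    rw [get1_append_right _ _ _ (by omega), hlt, show i + 1 - c = (i - c) + 1 by omega,
      get1_cons_succ _ _ _ (by omega)]
    conv_rhs => rw [← List.take_append_drop c w]
    rw [get1_append_right _ _ _ (by omega), hlt]
  have hlen : (ins w c).length = w.length + 1 := by simp [ins]; omega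
  constructor
  · intro _
    rcases Nat.eq_zero_or_pos c with h | h
    · subst h; simpa using g2
    · rw [g1 1 le_rfl h]; exact h1 (by rintro rfl; simp at hc; omega)
  · intro i hi hil
    rw [hlen] at hil
    rcases lt_trichotomy i c with h | h | h
    · rw [g1 i hi h.le, g1 (i+1) (by omega) h]; exact h2 i hi (by omega)
    · subst h; rw [g2, g1 i hi le_rfl]; rw [if_neg (by omega)]
    · rw [g3 i h]
      rcases Nat.eq_or_lt_of_le (Nat.succ_le_of_lt h) with hh | hh
      · simp only [Nat.succ_eq_add_one] at hh
        subst hh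
        rw [g2]
        split_ifs with hc0
        · subst hc0; have := h1 (by rintro rfl; simp at hil); simp [this]
        · have := h2 c (by omega) (by omega); omega
      · obtain ⟨k, rfl⟩ : ∃ k, i = k + 1 := ⟨i - 1, by omega⟩
        rw [g3 k (by omega)]
        exact h2 k (by omega) (by omega)

theorem countP_congr2 (l : List ℕ) (p q : ℕ → Prop) [DecidablePred p] [DecidablePred q]
    (h : ∀ x ∈ l, p x ↔ q x) : l.countP (fun b => p b) = l.countP (fun b => q b) := by
  apply List.countP_congr
  intro x hx; simpa using h x hx

theorem i0_eq (B R : List ℕ) (m k : ℕ) (hB : B = [] ∨ ∃ C y, B = C ++ [y] ∧ y ≠ m)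
    (hm : maxVal (B ++ List.replicate (k+1) m ++ R) = m) (hR : m ∉ R) :
    i0 (B ++ List.replicate (k+1) m ++ R) = B.length + 1 := by
  have hblk : ∀ j, B.length < j → j ≤ B.length + (k + 1) →
      get1 (B ++ List.replicate (k+1) m ++ R) j = m := by
    intro j h1 h2
    rw [get1_append_left _ _ _ (by omega) (by simp; omega), get1_append_right _ _ _ h1]
    have := get1_mem (List.replicate (k+1) m) (j - B.length) (by omega) (by simp; omega)
    exact List.eq_of_mem_replicate this
  unfold i0
  rw [hm]
  apply le_antisymm
  · apply Finset.sup_le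
    intro i hi
    simp only [Finset.mem_filter, Finset.mem_Icc] at hi
    obtain ⟨⟨h1, h2⟩, h3, h4⟩ := hi
    by_contra hc
    simp only [id, not_le] at hc
    by_cases h5 : i ≤ B.length + (k+1)
    · have := hblk (i - 1) (by omega) (by omega)
      rcases h4 with h4 | h4
      · omega
      · exact h4 this
    · rw [get1_append_right _ _ _ (by simp; omega)] at h3
      apply hR
      rw [← h3]
      apply get1_mem
      · simp; omega
      · simp at h2 ⊢; omega
  · apply Finset.le_sup (f := id)
    simp only [Finset.mem_filter, Finset.mem_Icc]
    refine ⟨⟨by omega, by simp; omega⟩, hblk _ (by omega) (by omega), ?_⟩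
    rcases hB with rfl | ⟨C, y, rfl, hy⟩
    · simp
    · right
      rw [List.append_assoc, get1_append_left _ _ _ (by simp) (by simp),
        get1_append_right _ _ _ (by simp)]
      simpa [get1] using hy

theorem step (w : List ℕ) (hw : IsAreaSeq w) (hne : w ≠ []) (a : ℕ) (ha : a ≤ Nadm w) :
    let c := (admissible w).getD a 0
    c ≤ w.length ∧ dinvL (ins w c) = dinvL w + a ∧ Nadm (ins w c) = a + 1 := by
  intro c
  have hc : c = (admissible w).getD a 0 := rfl
  clear_value c
  simp only [admissible, if_neg hne] at hc
  unfold Nadm at ha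
  set m := maxVal w with hm
  have hmem := maxVal_mem w hne
  have hle := le_maxVal w
  rw [← hm] at hmem hle
  by_cases h1 : a < (Maxb w).card
  · -- insertion after a maximal letter
    rw [List.append_assoc, List.getD_append _ _ _ _ (by simpa using h1)] at hc
    obtain ⟨s1, s2⟩ := sort_getD _ a h1
    rw [← hc] at s1 s2
    simp only [Maxb, Finset.mem_filter, Finset.mem_Icc] at s1
    obtain ⟨⟨hc1, hc2⟩, hcm⟩ := s1
    have s3 : (w.drop c).countP (fun b => b = m) = a := by
      rw [← card_Ioc w c (fun b => b = m), ← s2]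
      congr 1
      ext j
      simp only [Maxb, Finset.mem_filter, Finset.mem_Icc, Finset.mem_Ioc]
      constructor
      · rintro ⟨h, hh⟩; exact ⟨⟨by omega, hh⟩, h.1⟩
      · rintro ⟨⟨h, hh⟩, hgt⟩; exact ⟨by omega, hh⟩
    refine ⟨hc2, ?_⟩
    unfold ins
    rw [if_neg (by omega), hcm, ← hm]
    have hL : ∀ x ∈ w.take c, x ≤ m := fun x hx => hle x (List.mem_of_mem_take hx)
    have hR : ∀ x ∈ w.drop c, x ≤ m := fun x hx => hle x (List.mem_of_mem_drop hx)
    constructor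
    · rw [dinvL_insert, List.take_append_drop]
      rw [countP_congr2 (w.drop c) _ (fun b => b = m)
        (fun x hx => by have := hR x hx; omega), s3]
      rw [countP_congr2 (w.take c) _ (fun b => False)
        (fun x hx => by have := hL x hx; rw [iff_false]; omega)]
      simp
    · rw [Nadm_eq _ _ _ (fun x hx => by have := hL x hx; omega)
        (fun x hx => by have := hR x hx; omega)]
      rw [countP_congr2 (w.drop c) _ (fun b => b = m)
        (fun x hx => by omega), s3]
      rw [countP_congr2 (w.take c) _ (fun b => False)
        (fun x hx => by have := hL x hx; rw [iff_false]; omega)]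
      simp; omega
  rw [List.append_assoc, List.getD_append_right _ _ _ _ (by simpa using h1)] at hc
  simp only [List.length_reverse, Finset.length_sort] at hc
  obtain ⟨t, rfl⟩ : ∃ t, a = (Maxb w).card + t := ⟨a - (Maxb w).card, by omega⟩
  rw [Nat.add_sub_cancel_left] at hc
  by_cases h2 : t < (Maxa w).card
  · rw [List.getD_append _ _ _ _ (by simpa using h2)] at hc
    obtain ⟨s1, s2⟩ := sort_getD _ t h2
    rw [← hc] at s1 s2
    simp only [Maxa, Finset.mem_filter, Finset.mem_Icc] at s1
    obtain ⟨⟨hc1, hc2⟩, hcm, hcl⟩ := s1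
    rw [← hm] at hcm hcl
    have s3 : (w.drop c).countP (fun b => b + 1 = m) = t := by
      rw [← card_Ioc w c (fun b => b + 1 = m), ← s2]
      congr 1
      ext j
      simp only [Maxa, Finset.mem_filter, Finset.mem_Icc, Finset.mem_Ioc]
      constructor
      · rintro ⟨h, hh⟩
        exact ⟨⟨by omega, hh, fun i hi => hcl i (by simp; omega)⟩, h.1⟩
      · rintro ⟨⟨h, hh, _⟩, hgt⟩; exact ⟨by omega, hh⟩
    have hL : ∀ x ∈ w.take c, x ≤ m := fun x hx => hle x (List.mem_of_mem_take hx)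
    have h0 : (w.drop c).countP (fun b => b = m) = 0 := by
      rw [← card_Ioc w c (fun b => b = m), Finset.card_eq_zero, Finset.filter_eq_empty_iff]
      intro j hj; exact (hcl j hj).ne
    have hR : ∀ x ∈ w.drop c, x < m := by
      intro x hx
      rw [List.countP_eq_zero] at h0
      have := h0 x hx
      have := hle x (List.mem_of_mem_drop hx)
      simp at *
      omega
    have hb : (Maxb w).card = (w.take c).countP (fun b => b = m) := by
      rw [card_Maxb, ← hm]
      conv_lhs => rw [← List.take_append_drop c w]
      rw [List.countP_append, h0]; simp
    refine ⟨hc2, ?_⟩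
    unfold ins
    rw [if_neg (by omega), hcm]
    constructor
    · rw [dinvL_insert, List.take_append_drop]
      rw [countP_congr2 (w.drop c) _ (fun b => b + 1 = m)
        (fun x hx => by have := hR x hx; omega), s3]
      rw [countP_congr2 (w.take c) _ (fun b => b = m)
        (fun x hx => by have := hL x hx; omega), hb]
      omega
    · rw [Nadm_eq _ _ _ hL hR, s3, hb]
      omega
  have ht : t = (Maxa w).card := by omega
  rw [List.getD_append_right _ _ _ _ (by simp; omega)] at hc
  simp [ht] at hc
  change _ ∧ _ = dinvL w + ((Maxb w).card + t) ∧ _ = (Maxb w).card + t + 1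
  have hN : (Maxb w).card + t = Nadm w := by rw [ht]; rfl
  rw [hN]
  clear hN ht h2 h1 ha
  obtain ⟨A, R, hA, hR0⟩ := last_occ w m hmem
  obtain ⟨B, k, rfl, hB⟩ := tail_block A m
  have hwe : w = B ++ List.replicate (k+1) m ++ R := by
    rw [hA]; simp [List.replicate_succ']
  have hi : i0 w = B.length + 1 := by
    rw [hwe] at hm ⊢
    exact i0_eq B R m k hB hm.symm hR0
  rw [hi, Nat.add_sub_cancel] at hc
  subst hc
  have hx : (if B.length = 0 then 0 else get1 w B.length + 1) = m := by
    rcases hB with rfl | ⟨C, y, rfl, hy⟩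
    · have := hw.1 hne
      rw [hwe] at this
      simpa [get1, List.replicate_succ] using this.symm
    · have h3 := hw.2 (C ++ [y]).length (by simp) (by rw [hwe]; simp)
      have h4 : get1 w (C ++ [y]).length = y := by
        rw [hwe, List.append_assoc, get1_append_left _ _ _ (by simp) (by simp),
          get1_append_right _ _ _ (by simp)]
        simp [get1]
      have h5 : get1 w ((C ++ [y]).length + 1) = m := by
        rw [hwe, List.append_assoc, get1_append_right _ _ _ (by simp)]
        simp [get1, List.replicate_succ]
      have h6 := hle y (by rw [hwe]; simp)
      rw [if_neg (by simp), h4]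
      omega
  have hBle : ∀ x ∈ B, x ≤ m := fun x hx => hle x (by rw [hwe]; simp [hx])
  have hRlt : ∀ x ∈ R, x < m := fun x hx => by
    have := hle x (by rw [hwe]; simp [hx])
    have : x ≠ m := by rintro rfl; exact hR0 hx
    omega
  have hins : ins w B.length = B ++ m :: (List.replicate (k+1) m ++ R) := by
    unfold ins
    rw [hx]
    rw [hwe, List.append_assoc, List.take_left, List.drop_left]
  have hLle : ∀ j, ∀ x ∈ B ++ List.replicate j m, x ≤ m := by
    intro j x hx
    rcases List.mem_append.1 hx with h | h
    · exact hBle x h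
    · exact (List.eq_of_mem_replicate h).le
  have hNw : Nadm w = (B ++ List.replicate k m).countP (fun b => b = m) + 1
      + R.countP (fun b => b + 1 = m) := by
    rw [hA, Nadm_eq _ _ _ (hLle k) hRlt]
  refine ⟨by rw [hwe]; simp, ?_, ?_⟩
  · rw [hins, dinvL_insert, ← List.append_assoc, ← hwe, hNw]
    rw [List.countP_append, List.countP_append]
    rw [countP_congr2 R _ (fun b => b + 1 = m) (fun x hx => by have := hRlt x hx; omega)]
    rw [countP_congr2 B _ (fun b => b = m) (fun x hx => by have := hBle x hx; omega)]
    simp [List.countP_replicate]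
    omega
  · have : ins w B.length = (B ++ List.replicate (k+1) m) ++ m :: R := by
      rw [hins]
      have : m :: List.replicate (k+1) m = List.replicate (k+1) m ++ [m] := by
        rw [← List.replicate_succ, List.replicate_succ']
      rw [← List.cons_append, this]; simp
    rw [this, Nadm_eq _ _ _ (hLle (k+1)) hRlt, hNw]
    simp [List.countP_append, List.countP_replicate]
    omega

theorem main_ind (v : List ℕ) (hv : IsAreaSeq v.reverse) :
    IsAreaSeq (psiRev v) ∧ dinvL (psiRev v) = v.sum ∧
      ∀ a u, v = a :: u → psiRev v ≠ [] ∧ Nadm (psiRev v) = a + 1 := by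
  induction v with
  | nil => simp [psiRev, IsAreaSeq, dinvL]
  | cons a u ih =>
    have hu : IsAreaSeq u.reverse := by
      obtain ⟨h1, h2⟩ := hv
      rw [List.reverse_cons] at h1 h2
      constructor
      · intro h
        rw [← h1 (by simp), get1_append_left _ _ _ le_rfl]
        exact List.length_pos_iff.2 h
      · intro i hi hl
        have := h2 i hi (by rw [List.length_append]; omega)
        rwa [get1_append_left _ _ _ hi (by omega),
          get1_append_left _ _ _ (by omega) (by omega)] at this
    obtain ⟨i1, i2, i3⟩ := ih hu
    rw [psiRev]
    cases u with
    | nil =>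
      have ha : a = 0 := by
        have := hv.1 (by simp)
        simpa [get1] using this
      subst ha
      have e : ins (psiRev []) ((admissible (psiRev [])).getD 0 0) = [0] := by
        simp [psiRev, ins, admissible]
      rw [e]
      refine ⟨by simp [IsAreaSeq, get1], by simp [dinvL], ?_⟩
      intro a2 u2 h
      simp at h
      have := Nadm_eq [] [] 0 (by simp) (by simp)
      simp at this
      rw [← h.1, this]
      simp
    | cons b u =>
      obtain ⟨j1, j2⟩ := i3 b u rfl
      have hab : a ≤ b + 1 := by
        have := hv.2 (u.length + 1) (by omega) (by simp)
        simp only [List.reverse_cons] at this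
        rw [get1_append_right _ _ _ (by simp), get1_append_left _ _ _ (by simp) (by simp),
          get1_append_right _ _ _ (by simp)] at this
        simpa [get1] using this
      obtain ⟨s1, s2, s3⟩ := step (psiRev (b :: u)) i1 j1 a (by omega)
      refine ⟨isAreaSeq_ins _ _ i1 s1, ?_, ?_⟩
      · rw [s2, i2, List.sum_cons (a := a)]; omega
      · intro a2 u2 h
        simp only [List.cons.injEq] at h
        rw [← h.1]
        exact ⟨by simp [ins], s3⟩

/-- For every area sequence `w`, `dinv (ψ w) = area w`. -/
theorem dinv_psi_eq_area (w : List ℕ) (hw : IsAreaSeq w) :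
    dinv (psi w) = area w := by
  have := (main_ind w.reverse (by simpa using hw)).2.1
  rw [dinv_eq, psi, this, area, List.sum_reverse]
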